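/- Let φ be a real-valued Schwartz function on ℝ. Then the function (x,y) ↦ φ(x) · F(δ^y φ(x)) · |δ|^y φ′(x) is absolutely integrable on ℝ², and ∫_ℝ φ(x) · Q(φ, φ′)(x) dx = 0, where φ′ denotes the derivative of φ. This is the identity underlying conservation of the L² mass ‖φ(t)‖_{L²} for solutions of the SQG front equation. -/

import Mathlib

/-!
Write `u = δ^y φ(x)` and `f(x, y)` for the integrand on `ℝ²`.

*Integrability.* From `0 ≤ F ≤ 1` and `F(s) ≤ s²`, together with the boundedness of `φ` and the
Lipschitz bound for `φ′`, one gets `F(u) · ||δ|^y φ′(x)| ≤ K / (1 + y²)` uniformly in `x`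
(`exists_bound`). Hence `|f(x, y)| ≤ |φ(x)| K / (1 + y²)`, which is integrable on `ℝ²`.

*Vanishing.* By Fubini the integral is `∫ J(y) dy` with `J(y) = ∫ f(x, y) dx`. The substitution
`x ↦ x + y` gives `J(-y) = ∫ f(x + y, -y) dx`, where `u` is unchanged and `|δ|^y φ′` changes sign.
Therefore `J(y) + J(-y) = -∫ (φ(x+y) - φ(x)) F(u) |δ|^y φ′(x) dx = -|y| ∫ u F(u) ∂ₓu dx`. The last
integrand is the `x`-derivative of `G(u)`, `G(s) = s²/2 - √(1+s²)`, and `u → 0` as `x → ±∞`, so the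
integral is zero. Thus `J` is odd (`slice_odd`) and its integral vanishes.
-/

open MeasureTheory

/-- `F(s) = 1 − 1/√(1+s²)`. -/
noncomputable def Fq (s : ℝ) : ℝ := 1 - 1 / Real.sqrt (1 + s ^ 2)

open Filter Topology

lemma one_le_sqrt_one_add_sq (s : ℝ) : 1 ≤ Real.sqrt (1 + s ^ 2) :=
  Real.one_le_sqrt.2 (by nlinarith [sq_nonneg s])

lemma Fq_nonneg (s : ℝ) : 0 ≤ Fq s := by
  have h := one_le_sqrt_one_add_sq s
  have : 1 / Real.sqrt (1 + s ^ 2) ≤ 1 := by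
    rw [div_le_one (by linarith)]; exact h
  unfold Fq; linarith

lemma Fq_le_one (s : ℝ) : Fq s ≤ 1 := by
  have : 0 ≤ 1 / Real.sqrt (1 + s ^ 2) := by positivity
  unfold Fq; linarith

lemma Fq_le_sq (s : ℝ) : Fq s ≤ s ^ 2 := by
  have h := one_le_sqrt_one_add_sq s
  have h2 : Real.sqrt (1 + s ^ 2) ^ 2 = 1 + s ^ 2 := Real.sq_sqrt (by positivity)
  unfold Fq
  set r := Real.sqrt (1 + s ^ 2)
  have h3 : 1 - 1 / r = (r - 1) / r := by field_simp
  rw [h3, div_le_iff₀ (by linarith)]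
  have : s ^ 2 = (r - 1) * (r + 1) := by linarith
  rw [this]
  have h4 : 0 ≤ r - 1 := by linarith
  have h5 : 1 ≤ (r + 1) * r := by nlinarith
  nlinarith

lemma Fq_measurable : Measurable Fq := by
  unfold Fq; fun_prop

/-- An antiderivative of `s F(s)` is `s²/2 - √(1+s²)`. -/
lemma hasDerivAt_antideriv (s : ℝ) :
    HasDerivAt (fun s : ℝ => s ^ 2 / 2 - Real.sqrt (1 + s ^ 2)) (s * Fq s) s := by
  have h1 : HasDerivAt (fun s : ℝ => s ^ 2) (2 * s) s := by
    simpa using hasDerivAt_pow 2 s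
  have h2 := (h1.const_add 1).sqrt (by positivity)
  refine ((h1.div_const 2).sub h2).congr_deriv ?_
  have h := one_le_sqrt_one_add_sq s
  unfold Fq
  field_simp

lemma deriv_schwartz_continuous (φ : SchwartzMap ℝ ℝ) : Continuous (deriv (⇑φ)) :=
  (SchwartzMap.derivCLM ℝ ℝ φ).continuous

/-- Uniform decay in `y` of the integrand of `Q(φ, φ′)`. -/
lemma exists_bound (φ : SchwartzMap ℝ ℝ) : ∃ K : ℝ, ∀ x y : ℝ,
    |Fq ((φ (x + y) - φ x) / y) * ((deriv (⇑φ) (x + y) - deriv (⇑φ) x) / |y|)|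
      ≤ K * (1 + y ^ 2)⁻¹ := by
  set ψ := SchwartzMap.derivCLM ℝ ℝ φ with hψ
  set A := SchwartzMap.seminorm ℝ 0 0 φ
  set C := SchwartzMap.seminorm ℝ 0 0 (SchwartzMap.derivCLM ℝ ℝ ψ)
  have hA : ∀ x, |φ x| ≤ A := fun x => SchwartzMap.norm_le_seminorm ℝ φ x
  have hC : ∀ x, ‖deriv (⇑ψ) x‖ ≤ C := fun x =>
    SchwartzMap.norm_le_seminorm ℝ (SchwartzMap.derivCLM ℝ ℝ ψ) x
  have hC0 : 0 ≤ C := (norm_nonneg _).trans (hC 0)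
  refine ⟨C * (1 + (2 * A) ^ 2), fun x y => ?_⟩
  rw [← div_eq_mul_inv, le_div_iff₀ (by positivity)]
  rcases eq_or_ne y 0 with rfl | hy
  · simp; positivity
  have hlip : |deriv (⇑φ) (x + y) - deriv (⇑φ) x| ≤ C * |y| := by
    have := convex_univ.norm_image_sub_le_of_norm_deriv_le (f := ⇑ψ) (C := C)
      (fun z _ => ψ.differentiableAt) (fun z _ => hC z) (Set.mem_univ x) (Set.mem_univ (x + y))
    simpa [hψ] using this
  have hq : |(deriv (⇑φ) (x + y) - deriv (⇑φ) x) / (|y|)| ≤ C := by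
    rw [abs_div, abs_abs, div_le_iff₀ (abs_pos.2 hy)]
    exact hlip
  set s := (φ (x + y) - φ x) / y with hs
  have hsy : s * y = φ (x + y) - φ x := by rw [hs]; field_simp
  have hd : |s * y| ≤ 2 * A := by
    rw [hsy]
    calc |φ (x + y) - φ x| ≤ |φ (x + y)| + |φ x| := abs_sub _ _
      _ ≤ 2 * A := by linarith [hA x, hA (x + y)]
  have hFy : Fq s * (1 + y ^ 2) ≤ 1 + (2 * A) ^ 2 := by
    have h1 := Fq_le_one s
    have h2 : Fq s * y ^ 2 ≤ s ^ 2 * y ^ 2 := by gcongr; exact Fq_le_sq s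
    have h3 : s ^ 2 * y ^ 2 ≤ (2 * A) ^ 2 := by
      rw [← mul_pow, ← sq_abs]; gcongr
    linarith
  rw [abs_mul, abs_of_nonneg (Fq_nonneg s)]
  calc _ = (Fq s * (1 + y ^ 2)) * |(deriv (⇑φ) (x + y) - deriv (⇑φ) x) / (|y|)| := by ring
    _ ≤ (1 + (2 * A) ^ 2) * C := by gcongr
    _ = _ := by ring

lemma integrand_measurable (φ : SchwartzMap ℝ ℝ) : Measurable (fun p : ℝ × ℝ =>
      φ p.1 * Fq ((φ (p.1 + p.2) - φ p.1) / p.2) *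
        ((deriv (⇑φ) (p.1 + p.2) - deriv (⇑φ) p.1) / |p.2|)) := by
  have h1 := φ.continuous.measurable
  have h2 := (deriv_schwartz_continuous φ).measurable
  have h3 := Fq_measurable
  fun_prop

lemma integrand_integrable (φ : SchwartzMap ℝ ℝ) : Integrable (fun p : ℝ × ℝ =>
      φ p.1 * Fq ((φ (p.1 + p.2) - φ p.1) / p.2) *
        ((deriv (⇑φ) (p.1 + p.2) - deriv (⇑φ) p.1) / |p.2|)) volume := by
  obtain ⟨K, hK⟩ := exists_bound φ
  have hdom : Integrable (fun p : ℝ × ℝ => |φ p.1| * (K * (1 + p.2 ^ 2)⁻¹)) volume :=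
    (φ.integrable (μ := volume)).abs.mul_prod (integrable_inv_one_add_sq.const_mul K)
  refine hdom.mono' (integrand_measurable φ).aestronglyMeasurable (ae_of_all _ fun p => ?_)
  rw [Real.norm_eq_abs, mul_assoc, abs_mul]
  gcongr
  exact hK _ _

lemma slice_integrable (φ : SchwartzMap ℝ ℝ) (y : ℝ) : Integrable (fun x : ℝ =>
      φ x * Fq ((φ (x + y) - φ x) / y) *
        ((deriv (⇑φ) (x + y) - deriv (⇑φ) x) / |y|)) volume := by
  obtain ⟨K, hK⟩ := exists_bound φ
  have hdom : Integrable (fun x : ℝ => |φ x| * (K * (1 + y ^ 2)⁻¹)) volume :=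
    (φ.integrable (μ := volume)).abs.mul_const _
  refine hdom.mono' ((integrand_measurable φ).comp
    (measurable_id.prodMk measurable_const)).aestronglyMeasurable (ae_of_all _ fun x => ?_)
  simp only [Real.norm_eq_abs, mul_assoc, abs_mul (φ x)]
  gcongr
  exact hK _ _

/-- The slice integral `J(y) = ∫ f(x, y) dx` is an odd function of `y`. -/
lemma slice_odd (φ : SchwartzMap ℝ ℝ) (y : ℝ) :
    (∫ x : ℝ, φ x * Fq ((φ (x + -y) - φ x) / -y) *
        ((deriv (⇑φ) (x + -y) - deriv (⇑φ) x) / |-y|)) =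
    -∫ x : ℝ, φ x * Fq ((φ (x + y) - φ x) / y) *
        ((deriv (⇑φ) (x + y) - deriv (⇑φ) x) / |y|) := by
  rcases eq_or_ne y 0 with rfl | hy
  · simp
  set G : ℝ → ℝ := fun s => s ^ 2 / 2 - Real.sqrt (1 + s ^ 2) with hG
  have hneg := (slice_integrable φ (-y)).comp_add_right y
  have hpos := slice_integrable φ y
  rw [← integral_add_right_eq_self _ y, eq_neg_iff_add_eq_zero, ← integral_add hneg hpos]
  have hder : ∀ x, HasDerivAt (fun x => -|y| * G ((φ (x + y) - φ x) / y))
      (φ (x + y) * Fq ((φ (x + y + -y) - φ (x + y)) / -y) *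
        ((deriv (⇑φ) (x + y + -y) - deriv (⇑φ) (x + y)) / |-y|) +
      φ x * Fq ((φ (x + y) - φ x) / y) *
        ((deriv (⇑φ) (x + y) - deriv (⇑φ) x) / |y|)) x := by
    intro x
    have h1 : HasDerivAt (fun x => (φ (x + y) - φ x) / y)
        ((deriv (⇑φ) (x + y) - deriv (⇑φ) x) / y) x :=
      (((φ.hasDerivAt (x + y)).comp_add_const x y).sub (φ.hasDerivAt x)).div_const y
    have h2 := ((hasDerivAt_antideriv _).comp x h1).const_mul (-|y|)
    refine h2.congr_deriv ?_
    have e : (φ (x + y + -y) - φ (x + y)) / -y = (φ (x + y) - φ x) / y := by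
      rw [add_neg_cancel_right, div_neg, ← neg_div, neg_sub]
    rw [e, add_neg_cancel_right, abs_neg]
    generalize Fq ((φ (x + y) - φ x) / y) = c
    have hy' : |y| ≠ 0 := abs_ne_zero.2 hy
    have hyy : y ^ 2 = |y| ^ 2 := (sq_abs y).symm
    field_simp
    rw [hyy]
    field_simp
    ring
  have hlim : ∀ l : Filter ℝ, l ≤ cocompact ℝ → Tendsto (fun x => x + y) l l →
      Tendsto (fun x => -|y| * G ((φ (x + y) - φ x) / y)) l (𝓝 (-|y| * G 0)) := by
    intro l hl hly
    have h0 : Tendsto φ l (𝓝 0) := (SchwartzMap.tendsto_cocompact φ).mono_left hl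
    have h1 : Tendsto (fun x => (φ (x + y) - φ x) / y) l (𝓝 0) := by
      simpa using ((h0.comp hly).sub h0).div_const y
    exact ((hasDerivAt_antideriv 0).continuousAt.tendsto.comp h1).const_mul _
  have := integral_of_hasDerivAt_of_tendsto hder (hneg.add hpos)
    (hlim atBot atBot_le_cocompact (tendsto_atBot_add_const_right _ y tendsto_id))
    (hlim atTop atTop_le_cocompact (tendsto_atTop_add_const_right _ y tendsto_id))
  rw [this, sub_self]

/-- Conservation-of-mass identity: for real Schwartz `φ`, the integrand
`φ(x) F(δ^y φ(x)) |δ|^y φ′(x)` is absolutely integrable on `ℝ²` and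
`∫ φ(x) Q(φ, φ′)(x) dx = 0`. -/
theorem sqg_mass_identity (φ : SchwartzMap ℝ ℝ) :
    Integrable (fun p : ℝ × ℝ =>
      φ p.1 * Fq ((φ (p.1 + p.2) - φ p.1) / p.2) *
        ((deriv (⇑φ) (p.1 + p.2) - deriv (⇑φ) p.1) / |p.2|)) volume ∧
    (∫ x : ℝ, φ x * ∫ y : ℝ,
        Fq ((φ (x + y) - φ x) / y) * ((deriv (⇑φ) (x + y) - deriv (⇑φ) x) / |y|)) = 0 := by
  refine ⟨integrand_integrable φ, ?_⟩
  simp_rw [← integral_const_mul, ← mul_assoc]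
  rw [integral_integral_swap (integrand_integrable φ)]
  have h := integral_neg_eq_self (fun y : ℝ => ∫ x : ℝ, φ x * Fq ((φ (x + y) - φ x) / y) *
        ((deriv (⇑φ) (x + y) - deriv (⇑φ) x) / |y|)) volume
  simp_rw [slice_odd φ, integral_neg] at h
  linarith
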